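/- Suppose X ≠ ∅ and Y ≠ ∅. Then at least one of the following two inequalities holds: (i) λ₁ α ((1−α−β)^{m−1} + (1−D)^{m−1}) + (λ₀+λ₁) β^m ≥ S; or (ii) (λ₀+λ₁) β^m + (m(m−1)/C(m,k)) · α(α+β)(1−D)^{m−2} ≥ S. -/

import Mathlib

open scoped BigOperators

/-- The arc relation of the oriented star `S_{k,l}` on `Fin (k+l+1)`:
vertex `0` is the center, vertices `1,…,k` are the out-leaves and
vertices `k+1,…,k+l` are the in-leaves. -/
def StarArc (k l : ℕ) (a b : Fin (k + l + 1)) : Prop :=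
  (a.val = 0 ∧ 1 ≤ b.val ∧ b.val ≤ k) ∨ (b.val = 0 ∧ k + 1 ≤ a.val)

/-- `φ` witnesses an induced copy of `S_{k,l}` in the digraph with arc relation `A`:
it is injective and maps arcs to arcs and non-arcs to non-arcs. -/
def IsStarEmb (k l : ℕ) {V : Type*} (A : V → V → Prop) (φ : Fin (k + l + 1) → V) : Prop :=
  Function.Injective φ ∧ ∀ a b, StarArc k l a b ↔ A (φ a) (φ b)

/-- `s(G)`: the probability that a uniformly random map `V(S_{k,l}) → V(G)`
induces a copy of `S_{k,l}`. -/
noncomputable def starProb (k l : ℕ) (V : Type*) [Fintype V] (A : V → V → Prop) : ℝ :=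
  (Nat.card {φ : Fin (k + l + 1) → V // IsStarEmb k l A φ} : ℝ) /
    (Fintype.card V : ℝ) ^ (k + l + 1)

/-- The probability that a uniformly random map induces a copy of `S_{k,l}`
and moreover has property `P`. -/
noncomputable def starProbOn (k l : ℕ) {V : Type*} [Fintype V] (A : V → V → Prop)
    (P : (Fin (k + l + 1) → V) → Prop) : ℝ :=
  (Nat.card {φ : Fin (k + l + 1) → V // IsStarEmb k l A φ ∧ P φ} : ℝ) /
    (Fintype.card V : ℝ) ^ (k + l + 1)

/-- `s(z→v) = Pr[φ ∈ 𝒮 | φ z = v]`. -/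
noncomputable def sCond (k l : ℕ) {V : Type*} [Fintype V] (A : V → V → Prop)
    (z : Fin (k + l + 1)) (v : V) : ℝ :=
  (Nat.card {φ : Fin (k + l + 1) → V // IsStarEmb k l A φ ∧ φ z = v} : ℝ) /
    (Fintype.card V : ℝ) ^ (k + l)

/-- `Pr[φ ∈ 𝒮 ∧ P φ | φ(c) = v]`, where `c = 0` is the center of the star. -/
noncomputable def sCondOn (k l : ℕ) {V : Type*} [Fintype V] (A : V → V → Prop) (v : V)
    (P : (Fin (k + l + 1) → V) → Prop) : ℝ :=
  (Nat.card {φ : Fin (k + l + 1) → V // IsStarEmb k l A φ ∧ φ 0 = v ∧ P φ} : ℝ) /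
    (Fintype.card V : ℝ) ^ (k + l)

/-- `s(v) = (s(c→v) + l·s(i→v) + k·s(o→v))/(m+1)`, where the center is `0`,
`k+1` is an in-leaf and `1` is an out-leaf. -/
noncomputable def sVert (k l : ℕ) {V : Type*} [Fintype V] (A : V → V → Prop) (v : V) : ℝ :=
  (sCond k l A 0 v + l * sCond k l A (Fin.ofNat (k + l + 1) (k + 1)) v
      + k * sCond k l A 1 v) / ((k : ℝ) + l + 1)

/-- `ρ(v)`: the proportion of vertices adjacent to `v`. -/
noncomputable def rho {V : Type*} [Fintype V] (A : V → V → Prop) (v : V) : ℝ :=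
  (Nat.card {u : V // A v u ∨ A u v} : ℝ) / (Fintype.card V : ℝ)

/-- `ρ⁺_B(v)`: the proportion of vertices that are out-neighbours of `v` lying in `B`. -/
noncomputable def rhoPIn {V : Type*} [Fintype V] (A : V → V → Prop) (B : Set V) (v : V) : ℝ :=
  (Nat.card {u : V // A v u ∧ u ∈ B} : ℝ) / (Fintype.card V : ℝ)

/-- `ρ⁻_B(v)`: the proportion of vertices that are in-neighbours of `v` lying in `B`. -/
noncomputable def rhoMIn {V : Type*} [Fintype V] (A : V → V → Prop) (B : Set V) (v : V) : ℝ :=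
  (Nat.card {u : V // A u v ∧ u ∈ B} : ℝ) / (Fintype.card V : ℝ)

/-- `ρ_B(v)`: the proportion of vertices adjacent to `v` lying in `B`. -/
noncomputable def rhoIn {V : Type*} [Fintype V] (A : V → V → Prop) (B : Set V) (v : V) : ℝ :=
  (Nat.card {u : V // (A v u ∨ A u v) ∧ u ∈ B} : ℝ) / (Fintype.card V : ℝ)

/-- `μ(B) = |B|/n`. -/
noncomputable def muSet {V : Type*} [Fintype V] (B : Set V) : ℝ :=
  (Nat.card B : ℝ) / (Fintype.card V : ℝ)

/-- `X`: the set of vertices of large degree, `ρ(v) ≥ 1/2`. -/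
def bigX {V : Type*} [Fintype V] (A : V → V → Prop) : Set V := {v | 1 / 2 ≤ rho A v}

/-- `Y = V(G) \ X`. -/
def bigY {V : Type*} [Fintype V] (A : V → V → Prop) : Set V := (bigX A)ᶜ

/-- `α = μ(X)`. -/
noncomputable def alphaX {V : Type*} [Fintype V] (A : V → V → Prop) : ℝ := muSet (bigX A)

/-- `D = min_{x ∈ X} ρ(x)`. -/
noncomputable def Dmin {V : Type*} [Fintype V] (A : V → V → Prop) : ℝ :=
  sInf (rho A '' bigX A)

/-- `β = max_{y ∈ Y} ρ_Y(y)`. -/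
noncomputable def betaY {V : Type*} [Fintype V] (A : V → V → Prop) : ℝ :=
  sSup ((fun y => rhoIn A (bigY A) y) '' bigY A)

/-- `γ = min_{x ∈ X} ρ⁻_Y(x)`. -/
noncomputable def gammaX {V : Type*} [Fintype V] (A : V → V → Prop) : ℝ :=
  sInf ((fun x => rhoMIn A (bigY A) x) '' bigX A)

/-- `S = (m+1)·min_{v ∈ V(G)} s(v)`. -/
noncomputable def Smin (k l : ℕ) {V : Type*} [Fintype V] (A : V → V → Prop) : ℝ :=
  ((k : ℝ) + l + 1) * sInf (Set.range (sVert k l A))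

/-- `S₁ = min_{x ∈ X} (ρ⁺_Y(x))^k (ρ⁻_Y(x))^l`. -/
noncomputable def S1min (k l : ℕ) {V : Type*} [Fintype V] (A : V → V → Prop) : ℝ :=
  sInf ((fun x => rhoPIn A (bigY A) x ^ k * rhoMIn A (bigY A) x ^ l) '' bigX A)

/-- `S₂ = S₁ − ((m−1)/((m+1)·C(m,k)))·(α+β)(1−α)(1−D)^{m−2}`. -/
noncomputable def S2min (k l : ℕ) {V : Type*} [Fintype V] (A : V → V → Prop) : ℝ :=
  S1min k l A - (((k : ℝ) + l - 1) / (((k : ℝ) + l + 1) * (Nat.choose (k + l) k : ℝ)))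
    * (alphaX A + betaY A) * (1 - alphaX A) * (1 - Dmin A) ^ (k + l - 2)

/-- `λ₀ = k^k l^l / m^m`. -/
noncomputable def lam0 (k l : ℕ) : ℝ := (k : ℝ) ^ k * (l : ℝ) ^ l / ((k : ℝ) + l) ^ (k + l)

/-- `λ₁ = k^k l (l−1)^{l−1} / (m−1)^{m−1}` (with the convention `0⁰ = 1`). -/
noncomputable def lam1 (k l : ℕ) : ℝ :=
  (k : ℝ) ^ k * (l : ℝ) * ((l : ℝ) - 1) ^ (l - 1) / ((k : ℝ) + l - 1) ^ (k + l - 1)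

/-- The edge density `ρ(Z)` of a set of vertices `Z`: the number of unordered adjacent
pairs in `Z` divided by `C(|Z|,2)`. -/
noncomputable def densSet {V : Type*} [Fintype V] (A : V → V → Prop) (Z : Set V) : ℝ :=
  ((Nat.card {p : V × V // p.1 ∈ Z ∧ p.2 ∈ Z ∧ (A p.1 p.2 ∨ A p.2 p.1)} : ℝ) / 2) /
    (Nat.choose (Nat.card Z) 2 : ℝ)

/-- `d = 1 − (E_{x ∈ X} ρ⁻_Y(x))/(1−α)`. -/
noncomputable def dXY {V : Type*} [Fintype V] (A : V → V → Prop) : ℝ :=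
  1 - ((∑ᶠ x ∈ bigX A, rhoMIn A (bigY A) x) / (Nat.card (bigX A) : ℝ)) / (1 - alphaX A)

/-- `OPT(k,l)`. -/
noncomputable def OPT (k l : ℕ) : ℝ :=
  if k = l then
    (1 / 2 ^ (2 * k)) *
      sSup {y : ℝ | ∃ a ∈ Set.Icc (0 : ℝ) 1, y = a * (1 - a) ^ (2 * k) + (1 - a) * a ^ (2 * k)}
  else
    sSup {y : ℝ | ∃ a ∈ Set.Icc (0 : ℝ) (1 / 2),
      ∃ d ∈ Set.Icc (0 : ℝ) ((k : ℝ) / ((k : ℝ) + (l : ℝ))),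
      y = a * (1 - a) ^ (k + l) * d ^ k * (1 - d) ^ l
        + (((k : ℝ) - 1) ^ (k - 1) * (l : ℝ) ^ l / ((k : ℝ) + (l : ℝ) - 1) ^ (k + l - 1))
          * (1 - a) * a ^ (k + l) * (1 - d)}

/-!
By symmetry among the out-leaves and among the in-leaves, `(m + 1) s(v) n ^ m` is the number of
induced copies of `S_{k,l}` through `v`. Take `v ∈ Y` attaining `β` and sort the copies through
`v` by their centre and by whether some leaf lies in `X`; a leaf `x ∈ X` confines the other leaves
to the non-neighbours of `x`. A copy with prescribed centre and `t` prescribed leaves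
distributes its remaining leaves over `a` out-neighbours and `b` in-neighbours of the centre, so
there are at most as many such copies as a partial derivative of `a ^ k * b ^ l` of order `t`. With
`r = a + b` this is at most `λ₀ r ^ m` for `t = 0` and, as `l ≤ k`, at most `λ₁ r ^ (m - 1)` for
`t = 1`, both by the weighted AM-GM inequality, and at most `m (m - 1) / C(m, k) * r ^ (m - 2)` for
`t = 2`, by the binomial theorem. Adding up,

  `S ≤ (λ₀ + λ₁) β ^ m + μ(X ∩ N(v)) Q + μ(X \ N(v)) R`

where `(λ₀ + λ₁) β ^ m + α Q` and `(λ₀ + λ₁) β ^ m + α R` are the two quantities to be compared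
with `S`. As `μ(X ∩ N(v)) + μ(X \ N(v)) = α`, the larger of `Q` and `R` gives the claim.
-/

section Inequalities

variable {a b : ℝ}

lemma le_add_mul_or_le_add_mul {s p q r x y t : ℝ} (hx : 0 ≤ x) (hy : 0 ≤ y) (hxy : x + y = t)
    (h : s ≤ p + x * q + y * r) : s ≤ p + t * q ∨ s ≤ p + t * r := by
  subst hxy
  rcases le_total r q with hrq | hqr
  · exact Or.inl (by linarith [mul_le_mul_of_nonneg_left hrq hy])
  · exact Or.inr (by linarith [mul_le_mul_of_nonneg_left hqr hx])

lemma pow_mul_pow_le_lam0_mul (ha : 0 ≤ a) (hb : 0 ≤ b) (p q : ℕ) :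
    a ^ p * b ^ q ≤ lam0 p q * (a + b) ^ (p + q) := by
  rcases p.eq_zero_or_pos with rfl | hp
  · rcases q.eq_zero_or_pos with rfl | hq
    · simp [lam0]
    · simpa [lam0, hq.ne'] using pow_le_pow_left₀ hb (le_add_of_nonneg_left ha) q
  rcases q.eq_zero_or_pos with rfl | hq
  · simpa [lam0, hp.ne'] using pow_le_pow_left₀ ha (le_add_of_nonneg_right hb) p
  have hpq : (p + q : ℝ) ≠ 0 := by positivity
  have amgm : (a / p) ^ (p / (p + q) : ℝ) * (b / q) ^ (q / (p + q) : ℝ) ≤ (a + b) / (p + q) := by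
    convert! Real.geom_mean_le_arith_mean2_weighted (w₁ := p / (p + q)) (w₂ := q / (p + q))
      (p₁ := a / p) (p₂ := b / q) (by positivity) (by positivity) (by positivity) (by positivity)
      (by field_simp) using 1
    field_simp
  have amgm_pow : (a / p) ^ p * (b / q) ^ q ≤ ((a + b) / (p + q)) ^ (p + q) := by
    convert! pow_le_pow_left₀ (by positivity) amgm (p + q) using 1
    rw [mul_pow, ← Real.rpow_mul_natCast (by positivity), ← Real.rpow_mul_natCast (by positivity),
      Nat.cast_add, div_mul_cancel₀ _ hpq, div_mul_cancel₀ _ hpq, Real.rpow_natCast,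
      Real.rpow_natCast]
  calc a ^ p * b ^ q = (p : ℝ) ^ p * (q : ℝ) ^ q * ((a / p) ^ p * (b / q) ^ q) := by
        rw [div_pow, div_pow]; field_simp
    _ ≤ (p : ℝ) ^ p * (q : ℝ) ^ q * ((a + b) / (p + q)) ^ (p + q) := by gcongr
    _ = lam0 p q * (a + b) ^ (p + q) := by rw [lam0, div_pow]; ring

lemma lam0_nonneg (k l : ℕ) : 0 ≤ lam0 k l := by
  unfold lam0
  positivity

lemma lam1_succ (k l : ℕ) : lam1 k (l + 1) = (l + 1) * lam0 k l := by
  simp only [lam1, lam0, Nat.cast_add_one, add_sub_cancel_right, Nat.add_sub_cancel,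
    ← add_assoc]
  ring

lemma lam1_nonneg {l : ℕ} (k : ℕ) (hl : 1 ≤ l) : 0 ≤ lam1 k l := by
  obtain ⟨q, rfl⟩ := Nat.exists_eq_add_of_le' hl
  rw [lam1_succ]
  exact mul_nonneg (by positivity) (lam0_nonneg k q)

lemma pow_mul_succ_pow_le {p q : ℕ} (hqp : q ≤ p) :
    (p : ℝ) ^ p * ((q : ℝ) + 1) ^ q ≤ ((p : ℝ) + 1) ^ p * (q : ℝ) ^ q := by
  obtain ⟨t, rfl⟩ := Nat.exists_eq_add_of_le hqp
  have ht : (0 : ℝ) < (t : ℝ) ^ t := mod_cast Nat.pow_self_pos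
  have hqt : (0 : ℝ) < (q + t : ℝ) ^ (q + t) := mod_cast Nat.pow_self_pos
  have amgm :=
    pow_mul_pow_le_lam0_mul (a := (q : ℝ) + 1) (b := t) (by positivity) (by positivity) q t
  rw [lam0, div_mul_eq_mul_div, le_div_iff₀ hqt, add_right_comm] at amgm
  refine le_of_mul_le_mul_right ?_ ht
  push_cast
  linarith

lemma succ_mul_lam0_succ_le {p q : ℕ} (hqp : q ≤ p) :
    (p + 1) * lam0 p (q + 1) ≤ (q + 1) * lam0 (p + 1) q := by
  have hden : ((p + 1 : ℕ) + q : ℝ) ^ (p + 1 + q) = (p + (q + 1 : ℕ) : ℝ) ^ (p + (q + 1)) := by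
    push_cast; ring
  rw [lam0, lam0, hden, ← mul_div_assoc, ← mul_div_assoc]
  gcongr ?_ / _
  push_cast
  calc (p + 1) * ((p : ℝ) ^ p * ((q : ℝ) + 1) ^ (q + 1))
      = ((p + 1) * (q + 1)) * ((p : ℝ) ^ p * ((q : ℝ) + 1) ^ q) := by ring
    _ ≤ ((p + 1) * (q + 1)) * (((p : ℝ) + 1) ^ p * (q : ℝ) ^ q) := by
        gcongr ?_ * ?_
        exact pow_mul_succ_pow_le hqp
    _ = (q + 1) * (((p : ℝ) + 1) ^ (p + 1) * (q : ℝ) ^ q) := by ring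

lemma choose_mul_pow_mul_pow_le (ha : 0 ≤ a) (hb : 0 ≤ b) (p q : ℕ) :
    ((p + q).choose p : ℝ) * (a ^ p * b ^ q) ≤ (a + b) ^ (p + q) := by
  rw [add_pow]
  convert! Finset.single_le_sum (f := fun i => a ^ i * b ^ (p + q - i) * ((p + q).choose i : ℝ))
    (s := Finset.range (p + q + 1)) (fun i _ => by positivity)
    (Finset.mem_range.2 (show p < p + q + 1 by omega)) using 1
  rw [Nat.add_sub_cancel_left, mul_comm]

lemma choose_mul_descFactorial_mul_descFactorial {k l i j : ℕ} (hi : i ≤ k) (hj : j ≤ l) :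
    (k + l).choose k * (k.descFactorial i * l.descFactorial j) =
      (k + l).descFactorial (i + j) * (k - i + (l - j)).choose (k - i) := by
  have hsub : k + l - (i + j) = k - i + (l - j) := by omega
  have hpos : 0 < (k - i).factorial * (l - j).factorial := by positivity
  refine Nat.eq_of_mul_eq_mul_right hpos ?_
  calc (k + l).choose k * (k.descFactorial i * l.descFactorial j)
        * ((k - i).factorial * (l - j).factorial)
      = (k + l).choose k * ((k - i).factorial * k.descFactorial i)
        * ((l - j).factorial * l.descFactorial j) := by ring
    _ = (k + l).factorial := by
        rw [Nat.factorial_mul_descFactorial hi, Nat.factorial_mul_descFactorial hj,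
          Nat.choose_symm_add, Nat.add_choose_mul_factorial_mul_factorial]
    _ = (k - i + (l - j)).factorial * (k + l).descFactorial (i + j) := by
        rw [← hsub, Nat.factorial_mul_descFactorial (add_le_add hi hj)]
    _ = _ := by
        rw [← Nat.add_choose_mul_factorial_mul_factorial (k - i) (l - j), ← Nat.choose_symm_add]
        ring

/-- The number of ways to place `i` given vertices among `k` out-leaves and `j` given vertices
among `l` in-leaves, when each remaining out-leaf has `a` and each remaining in-leaf has `b`
possible images. As a function of `a` and `b` it is the derivative of
`a ^ k * b ^ l` taken `i` times in `a` and `j` times in `b`. -/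
noncomputable def leafWeight (k l i j : ℕ) (a b : ℝ) : ℝ :=
  k.descFactorial i * l.descFactorial j * (a ^ (k - i) * b ^ (l - j))

lemma leafWeight_zero_zero_le (k l : ℕ) (ha : 0 ≤ a) (hb : 0 ≤ b) :
    leafWeight k l 0 0 a b ≤ lam0 k l * (a + b) ^ (k + l) := by
  simpa [leafWeight] using pow_mul_pow_le_lam0_mul ha hb k l

lemma leafWeight_le_lam1_mul {k l i j : ℕ} (hl : 1 ≤ l) (hlk : l ≤ k) (hij : i + j = 1)
    (ha : 0 ≤ a) (hb : 0 ≤ b) :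
    leafWeight k l i j a b ≤ lam1 k l * (a + b) ^ (k + l - 1) := by
  obtain ⟨q, rfl⟩ := Nat.exists_eq_add_of_le' hl
  rw [lam1_succ]
  rcases Nat.add_eq_one_iff.1 hij with ⟨rfl, rfl⟩ | ⟨rfl, rfl⟩
  · calc leafWeight k (q + 1) 0 1 a b = (q + 1) * (a ^ k * b ^ q) := by simp [leafWeight]
      _ ≤ (q + 1) * (lam0 k q * (a + b) ^ (k + q)) := by
          gcongr _ * ?_
          exact pow_mul_pow_le_lam0_mul ha hb k q
      _ = _ := by rw [mul_assoc]; rfl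
  · obtain ⟨p, rfl⟩ := Nat.exists_eq_add_of_le' (hl.trans hlk)
    calc leafWeight (p + 1) (q + 1) 1 0 a b = (p + 1) * (a ^ p * b ^ (q + 1)) := by
          simp [leafWeight]
      _ ≤ (p + 1) * (lam0 p (q + 1) * (a + b) ^ (p + (q + 1))) := by
          gcongr _ * ?_
          exact pow_mul_pow_le_lam0_mul ha hb p (q + 1)
      _ ≤ (q + 1) * lam0 (p + 1) q * (a + b) ^ (p + (q + 1)) := by
          rw [← mul_assoc]
          gcongr ?_ * _
          exact succ_mul_lam0_succ_le (by omega)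
      _ = _ := by congr 2; omega

lemma leafWeight_le_descFactorial_div_choose_mul (k l i j : ℕ) (ha : 0 ≤ a) (hb : 0 ≤ b) :
    leafWeight k l i j a b ≤
      (k + l).descFactorial (i + j) / (k + l).choose k * (a + b) ^ (k + l - (i + j)) := by
  rcases lt_or_ge k i with hi | hi
  · rw [leafWeight, Nat.descFactorial_eq_zero_iff_lt.2 hi, Nat.cast_zero, zero_mul, zero_mul]
    positivity
  rcases lt_or_ge l j with hj | hj
  · rw [leafWeight, Nat.descFactorial_eq_zero_iff_lt.2 hj, Nat.cast_zero, mul_zero, zero_mul]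
    positivity
  have hc : (0 : ℝ) < (k + l).choose k := mod_cast Nat.choose_pos (Nat.le_add_right k l)
  have hchoose : ((k + l).choose k * (k.descFactorial i * l.descFactorial j) : ℝ) =
      (k + l).descFactorial (i + j) * (k - i + (l - j)).choose (k - i) :=
    mod_cast choose_mul_descFactorial_mul_descFactorial hi hj
  rw [div_mul_eq_mul_div, le_div_iff₀' hc]
  calc (k + l).choose k * leafWeight k l i j a b
      = (k + l).descFactorial (i + j) *
          ((k - i + (l - j)).choose (k - i) * (a ^ (k - i) * b ^ (l - j))) := by
        rw [leafWeight, ← mul_assoc, hchoose, mul_assoc]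
    _ ≤ (k + l).descFactorial (i + j) * (a + b) ^ (k + l - (i + j)) := by
        rw [show k + l - (i + j) = k - i + (l - j) by omega]
        gcongr
        exact choose_mul_pow_mul_pow_le ha hb _ _

end Inequalities

section Counting

open Finset

variable {ι α : Type*}

section InjectionsBetween

variable [Fintype ι] [DecidableEq ι] [Fintype α] [DecidableEq α]

variable (ι) in
/-- The injective maps `ι → α` whose range contains `F` and is contained in `F ∪ P`. -/
def injectionsBetween (F P : Finset α) : Finset (ι → α) :=
  {f | f.Injective ∧ F ⊆ univ.image f ∧ univ.image f ⊆ F ∪ P}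

lemma card_injectionsBetween_le (F P : Finset α) :
    #(injectionsBetween ι F P) ≤
      (Fintype.card ι).descFactorial #F * #P ^ (Fintype.card ι - #F) := by
  let fibre (g : F ↪ ι) : Finset (ι → α) :=
    Fintype.piFinset (Function.extend g (fun x => {x.1}) fun _ => P)
  have card_fibre (g : F ↪ ι) : #(fibre g) = #P ^ (Fintype.card ι - #F) := by
    have himage : ∏ i ∈ univ.map g, #(Function.extend g (fun x => {x.1}) (fun _ => P) i) = 1 := by
      simp [g.injective.extend_apply]
    have hcompl : ∀ i ∈ (univ.map g)ᶜ,
        #(Function.extend g (fun x => {x.1}) (fun _ => P) i) = #P := by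
      intro i hi
      rw [Function.extend_apply' _ _ _ (by simpa using hi)]
    rw [Fintype.card_piFinset, ← prod_mul_prod_compl (univ.map g), himage, one_mul,
      prod_congr rfl hcompl, prod_const, card_compl, card_map, card_univ, Fintype.card_coe]
  have hcover : injectionsBetween ι F P ⊆ univ.biUnion fibre := by
    intro f hf
    obtain ⟨hinj, hF, hFP⟩ := (mem_filter_univ f).1 hf
    have hpre (x : F) : ∃ i, f i = x := by simpa using hF x.2
    choose g hg using hpre
    have hg_inj : g.Injective := fun x y hxy => Subtype.ext (by rw [← hg x, hxy, hg y])
    refine mem_biUnion.2 ⟨⟨g, hg_inj⟩, mem_univ _, Fintype.mem_piFinset.2 fun i => ?_⟩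
    by_cases hi : ∃ x, g x = i
    · obtain ⟨x, rfl⟩ := hi
      simp [hg_inj.extend_apply, hg]
    · rw [Function.Embedding.coeFn_mk, Function.extend_apply' _ _ _ hi]
      refine (mem_union.1 (hFP (mem_image_of_mem f (mem_univ i)))).resolve_left fun hfi => ?_
      exact hi ⟨⟨f i, hfi⟩, hinj (hg _)⟩
  calc _ ≤ #(univ.biUnion fibre) := card_le_card hcover
    _ ≤ #(univ : Finset (F ↪ ι)) * #P ^ (Fintype.card ι - #F) :=
        card_biUnion_le_card_mul _ _ _ fun g _ => (card_fibre g).le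
    _ = _ := by rw [card_univ, Fintype.card_embedding_eq, Fintype.card_coe]

end InjectionsBetween

lemma natCast_card_biUnion_le [DecidableEq α] (s : Finset ι) (t : ι → Finset α)
    {K : ℝ} (hK : ∀ i ∈ s, (#(t i) : ℝ) ≤ K) : (#(s.biUnion t) : ℝ) ≤ #s * K :=
  calc (#(s.biUnion t) : ℝ) ≤ ∑ i ∈ s, (#(t i) : ℝ) := mod_cast card_biUnion_le
    _ ≤ #s * K := by simpa using sum_le_card_nsmul s _ K hK

end Counting

section StarVertices

variable (k l : ℕ)

/-- The `i`-th out-leaf of the star `S_{k,l}`. -/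
def outLeaf (i : Fin k) : Fin (k + l + 1) := (Fin.castAdd l i).succ

/-- The `j`-th in-leaf of the star `S_{k,l}`. -/
def inLeaf (j : Fin l) : Fin (k + l + 1) := (Fin.natAdd k j).succ

@[simp]
lemma val_outLeaf (i : Fin k) : (outLeaf k l i).val = i + 1 := rfl

@[simp]
lemma val_inLeaf (j : Fin l) : (inLeaf k l j).val = k + j + 1 := rfl

lemma outLeaf_injective : Function.Injective (outLeaf k l) :=
  (Fin.succ_injective _).comp (Fin.castAdd_injective k l)

lemma inLeaf_injective : Function.Injective (inLeaf k l) :=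
  (Fin.succ_injective _).comp (Fin.natAdd_injective l k)

variable {k l}

lemma forall_fin_succ_iff_leaf {p : Fin (k + l) → Prop} :
    (∀ i, p i) ↔ (∀ i, p (Fin.castAdd l i)) ∧ ∀ j, p (Fin.natAdd k j) :=
  ⟨fun h => ⟨fun _ => h _, fun _ => h _⟩, fun h i => Fin.addCases h.1 h.2 i⟩

lemma sum_star {M : Type*} [AddCommMonoid M] (f : Fin (k + l + 1) → M) :
    ∑ z, f z = f 0 + (∑ i, f (outLeaf k l i) + ∑ j, f (inLeaf k l j)) := by
  rw [Fin.sum_univ_succ, Fin.sum_univ_add]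
  rfl

lemma starArc_swap_iff {z z' : Fin (k + l + 1)} (hz : 1 ≤ z.val) (hz' : 1 ≤ z'.val)
    (hzz' : z.val ≤ k ↔ z'.val ≤ k) (a b : Fin (k + l + 1)) :
    StarArc k l (Equiv.swap z z' a) (Equiv.swap z z' b) ↔ StarArc k l a b := by
  simp only [StarArc, Equiv.swap_apply_def, Fin.ext_iff]
  split_ifs <;> omega

end StarVertices

section Measure

open Finset

variable {V : Type*} [Fintype V]

lemma muSet_nonneg (B : Set V) : 0 ≤ muSet B := by
  unfold muSet
  positivity

lemma muSet_coe_mul_card [Nonempty V] (B : Finset V) :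
    muSet (B : Set V) * Fintype.card V = #B := by
  have hcard : (Fintype.card V : ℝ) ≠ 0 := mod_cast Fintype.card_ne_zero
  rw [muSet, div_mul_cancel₀ _ hcard, Nat.card_coe_set_eq, Set.ncard_coe_finset]

lemma muSet_inter_add_muSet_sdiff [Nonempty V] [DecidableEq V] (X U : Finset V) :
    muSet (↑(X ∩ U) : Set V) + muSet (↑(X \ U) : Set V) = muSet (X : Set V) := by
  have hn : (0 : ℝ) < Fintype.card V := mod_cast Fintype.card_pos
  refine mul_right_cancel₀ hn.ne' ?_
  rw [add_mul, muSet_coe_mul_card, muSet_coe_mul_card, muSet_coe_mul_card]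
  exact mod_cast card_inter_add_card_sdiff X U

end Measure

section Stars

open Finset

variable {k l : ℕ} {V : Type*} {A : V → V → Prop}

namespace IsStarEmb

variable {φ : Fin (k + l + 1) → V}

lemma comp_swap (hφ : IsStarEmb k l A φ) {z z' : Fin (k + l + 1)} (hz : 1 ≤ z.val)
    (hz' : 1 ≤ z'.val) (hzz' : z.val ≤ k ↔ z'.val ≤ k) :
    IsStarEmb k l A (φ ∘ Equiv.swap z z') :=
  ⟨hφ.1.comp (Equiv.injective _), fun a b =>
    (starArc_swap_iff hz hz' hzz' a b).symm.trans (hφ.2 _ _)⟩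

lemma adj_outLeaf (hφ : IsStarEmb k l A φ) (i : Fin k) : A (φ 0) (φ (outLeaf k l i)) :=
  (hφ.2 _ _).1 (Or.inl (by simp))

lemma not_adj_inLeaf (hφ : IsStarEmb k l A φ) (j : Fin l) : ¬ A (φ 0) (φ (inLeaf k l j)) := by
  rw [← hφ.2]
  simp [StarArc]

lemma inLeaf_adj (hφ : IsStarEmb k l A φ) (j : Fin l) : A (φ (inLeaf k l j)) (φ 0) :=
  (hφ.2 _ _).1 (Or.inr (by simp))

lemma not_outLeaf_adj (hφ : IsStarEmb k l A φ) (i : Fin k) : ¬ A (φ (outLeaf k l i)) (φ 0) := by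
  rw [← hφ.2]
  simp [StarArc]

lemma not_adj_of_leaf (hφ : IsStarEmb k l A φ) (i j : Fin (k + l)) :
    ¬ A (φ i.succ) (φ j.succ) := by
  rw [← hφ.2]
  simp [StarArc]

end IsStarEmb

/-- The set of images of the leaves of `S_{k,l}` under `φ`. -/
def leafImages [DecidableEq V] (φ : Fin (k + l + 1) → V) : Finset V := univ.image (Fin.tail φ)

lemma mem_leafImages [DecidableEq V] {φ : Fin (k + l + 1) → V} {v : V} :
    v ∈ leafImages φ ↔ ∃ i : Fin (k + l), φ i.succ = v := by
  simp [leafImages, Fin.tail]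

lemma mem_leafImages_iff_outLeaf_or_inLeaf [DecidableEq V] {φ : Fin (k + l + 1) → V}
    {v : V} :
    v ∈ leafImages φ ↔ (∃ i, φ (outLeaf k l i) = v) ∨ ∃ j, φ (inLeaf k l j) = v := by
  rw [mem_leafImages, ← not_iff_not, not_or, not_exists, not_exists, not_exists,
    forall_fin_succ_iff_leaf]
  rfl

variable [Fintype V]

open scoped Classical in
/-- The out-neighbourhood `N⁺(v)`. -/
noncomputable def outNbrs (A : V → V → Prop) (v : V) : Finset V := {u | A v u}

open scoped Classical in
/-- The in-neighbourhood `N⁻(v)`. -/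
noncomputable def inNbrs (A : V → V → Prop) (v : V) : Finset V := {u | A u v}

open scoped Classical in
variable (k l A) in
/-- The induced copies of `S_{k,l}`, as maps on the vertices of the star. -/
noncomputable def starEmbs : Finset (Fin (k + l + 1) → V) := {φ | IsStarEmb k l A φ}

lemma mem_starEmbs {φ : Fin (k + l + 1) → V} : φ ∈ starEmbs k l A ↔ IsStarEmb k l A φ := by
  simp [starEmbs]

lemma mem_outNbrs {u v : V} : u ∈ outNbrs A v ↔ A v u := by simp [outNbrs]

lemma mem_inNbrs {u v : V} : u ∈ inNbrs A v ↔ A u v := by simp [inNbrs]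

variable [DecidableEq V]

/-- The neighbourhood `N⁺(v) ∪ N⁻(v)`. -/
noncomputable def nbrs (A : V → V → Prop) (v : V) : Finset V := outNbrs A v ∪ inNbrs A v

lemma mem_nbrs {u v : V} : u ∈ nbrs A v ↔ A v u ∨ A u v := by
  rw [nbrs, mem_union, mem_outNbrs, mem_inNbrs]

lemma mem_nbrs_comm {u v : V} : u ∈ nbrs A v ↔ v ∈ nbrs A u := by
  rw [mem_nbrs, mem_nbrs, or_comm]

lemma card_inter_outNbrs_add_card_inter_inNbrs (hopp : ∀ u v, A u v → ¬ A v u) (U : Finset V)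
    (v : V) : #(U ∩ outNbrs A v) + #(U ∩ inNbrs A v) = #(U ∩ nbrs A v) := by
  have hdisj : Disjoint (outNbrs A v) (inNbrs A v) := by
    simpa [outNbrs, inNbrs, disjoint_filter] using fun u => hopp v u
  rw [nbrs, inter_union_distrib_left,
    card_union_of_disjoint (hdisj.mono inter_subset_right inter_subset_right)]

lemma IsStarEmb.leafImages_subset_nbrs {φ : Fin (k + l + 1) → V} (hφ : IsStarEmb k l A φ) :
    leafImages φ ⊆ nbrs A (φ 0) := by
  intro v hv
  rw [mem_nbrs]
  rcases mem_leafImages_iff_outLeaf_or_inLeaf.1 hv with ⟨i, rfl⟩ | ⟨j, rfl⟩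
  · exact Or.inl (hφ.adj_outLeaf i)
  · exact Or.inr (hφ.inLeaf_adj j)

lemma IsStarEmb.leafImages_subset_compl_nbrs {φ : Fin (k + l + 1) → V}
    (hφ : IsStarEmb k l A φ) {v : V} (hv : v ∈ leafImages φ) : leafImages φ ⊆ (nbrs A v)ᶜ := by
  intro u hu
  obtain ⟨i, rfl⟩ := mem_leafImages.1 hv
  obtain ⟨j, rfl⟩ := mem_leafImages.1 hu
  rw [mem_compl, mem_nbrs, not_or]
  exact ⟨hφ.not_adj_of_leaf i j, hφ.not_adj_of_leaf j i⟩

lemma card_starEmbs_apply_eq {z z' : Fin (k + l + 1)} (hz : 1 ≤ z.val)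
    (hz' : 1 ≤ z'.val) (hzz' : z.val ≤ k ↔ z'.val ≤ k) (v : V) :
    #{φ ∈ starEmbs k l A | φ z = v} = #{φ ∈ starEmbs k l A | φ z' = v} := by
  refine card_bij' (fun φ _ => φ ∘ Equiv.swap z z') (fun φ _ => φ ∘ Equiv.swap z z') ?_ ?_ ?_ ?_
  · intro φ hφ
    rw [mem_filter, mem_starEmbs] at hφ ⊢
    exact ⟨hφ.1.comp_swap hz hz' hzz', by simpa using hφ.2⟩
  · intro φ hφ
    rw [mem_filter, mem_starEmbs] at hφ ⊢
    exact ⟨hφ.1.comp_swap hz hz' hzz', by simpa using hφ.2⟩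
  all_goals intro φ _; ext a; simp

lemma sCond_mul_pow (z : Fin (k + l + 1)) (v : V) :
    sCond k l A z v * (Fintype.card V : ℝ) ^ (k + l) = #{φ ∈ starEmbs k l A | φ z = v} := by
  have hcard : (Fintype.card V : ℝ) ≠ 0 := mod_cast (Fintype.card_pos_iff.2 ⟨v⟩).ne'
  rw [sCond, div_mul_cancel₀ _ (pow_ne_zero _ hcard),
    Nat.subtype_card {φ ∈ starEmbs k l A | φ z = v} fun φ => by rw [mem_filter, mem_starEmbs]]

lemma card_starEmbs_mem_image (v : V) :
    #{φ ∈ starEmbs k l A | v ∈ univ.image φ} = ∑ z, #{φ ∈ starEmbs k l A | φ z = v} := by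
  have hdisj : ((univ : Finset (Fin (k + l + 1))) : Set _).PairwiseDisjoint
      fun z => {φ ∈ starEmbs k l A | φ z = v} := by
    intro z _ z' _ hzz'
    refine disjoint_filter.2 fun φ hφ hz hz' => hzz' ?_
    exact (mem_starEmbs.1 hφ).1 (hz.trans hz'.symm)
  rw [← card_biUnion hdisj]
  congr 1
  ext φ
  simp

lemma sVert_mul_pow (hk : 1 ≤ k) (hl : 1 ≤ l) (v : V) :
    ((k : ℝ) + l + 1) * sVert k l A v * (Fintype.card V : ℝ) ^ (k + l) =
      #{φ ∈ starEmbs k l A | v ∈ univ.image φ} := by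
  have hout (i : Fin k) :
      #{φ ∈ starEmbs k l A | φ (outLeaf k l i) = v} = #{φ ∈ starEmbs k l A | φ 1 = v} := by
    have hone : (1 : Fin (k + l + 1)).val = 1 := by
      rw [Fin.val_one']; exact Nat.mod_eq_of_lt (by omega)
    apply card_starEmbs_apply_eq <;> simp only [val_outLeaf, hone] <;> omega
  have hin (j : Fin l) : #{φ ∈ starEmbs k l A | φ (inLeaf k l j) = v} =
      #{φ ∈ starEmbs k l A | φ (Fin.ofNat (k + l + 1) (k + 1)) = v} := by
    have hval : (Fin.ofNat (k + l + 1) (k + 1)).val = k + 1 := Nat.mod_eq_of_lt (by omega)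
    apply card_starEmbs_apply_eq <;> simp only [val_inLeaf, hval] <;> omega
  have hpos : (k : ℝ) + l + 1 ≠ 0 := by positivity
  rw [card_starEmbs_mem_image, sum_star, sum_congr rfl fun i _ => hout i,
    sum_congr rfl fun j _ => hin j, sVert, mul_div_cancel₀ _ hpos]
  push_cast [sum_const, card_univ, Fintype.card_fin, smul_eq_mul, ← sCond_mul_pow]
  ring

lemma IsStarEmb.image_outLeaf {φ : Fin (k + l + 1) → V} (hφ : IsStarEmb k l A φ) :
    univ.image (φ ∘ outLeaf k l) = leafImages φ ∩ outNbrs A (φ 0) := by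
  ext v
  simp only [mem_image, mem_univ, true_and, Function.comp_apply, mem_inter,
    mem_leafImages_iff_outLeaf_or_inLeaf, mem_outNbrs]
  constructor
  · rintro ⟨i, rfl⟩
    exact ⟨Or.inl ⟨i, rfl⟩, hφ.adj_outLeaf i⟩
  · rintro ⟨hv | ⟨j, rfl⟩, hadj⟩
    · exact hv
    · exact absurd hadj (hφ.not_adj_inLeaf j)

lemma IsStarEmb.image_inLeaf {φ : Fin (k + l + 1) → V} (hφ : IsStarEmb k l A φ) :
    univ.image (φ ∘ inLeaf k l) = leafImages φ ∩ inNbrs A (φ 0) := by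
  ext v
  simp only [mem_image, mem_univ, true_and, Function.comp_apply, mem_inter,
    mem_leafImages_iff_outLeaf_or_inLeaf, mem_inNbrs]
  constructor
  · rintro ⟨j, rfl⟩
    exact ⟨Or.inr ⟨j, rfl⟩, hφ.inLeaf_adj j⟩
  · rintro ⟨⟨i, rfl⟩ | hv, hadj⟩
    · exact absurd hadj (hφ.not_outLeaf_adj i)
    · exact hv

variable (k l A) in
/-- The induced copies of `S_{k,l}` with centre `c` whose set of leaves contains `F` and is
contained in `F ∪ U`. -/
noncomputable def starsThrough (c : V) (F U : Finset V) : Finset (Fin (k + l + 1) → V) :=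
  {φ ∈ starEmbs k l A | φ 0 = c ∧ F ⊆ leafImages φ ∧ leafImages φ ⊆ F ∪ U}

lemma mem_starsThrough {c : V} {F U : Finset V} {φ : Fin (k + l + 1) → V} :
    φ ∈ starsThrough k l A c F U ↔
      IsStarEmb k l A φ ∧ φ 0 = c ∧ F ⊆ leafImages φ ∧ leafImages φ ⊆ F ∪ U := by
  rw [starsThrough, mem_filter, mem_starEmbs]

lemma card_starsThrough_le_mul (c : V) (F U : Finset V) :
    #(starsThrough k l A c F U) ≤
      #(injectionsBetween (Fin k) (F ∩ outNbrs A c) (U ∩ outNbrs A c)) *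
        #(injectionsBetween (Fin l) (F ∩ inNbrs A c) (U ∩ inNbrs A c)) := by
  rw [← card_product]
  refine card_le_card_of_injOn (fun φ => (φ ∘ outLeaf k l, φ ∘ inLeaf k l)) ?_ ?_
  · intro φ hφ
    obtain ⟨hemb, rfl, hF, hFU⟩ := mem_starsThrough.1 hφ
    simp only [injectionsBetween, coe_product, Set.mem_prod, mem_coe, mem_filter_univ,
      hemb.image_outLeaf, hemb.image_inLeaf, ← union_inter_distrib_right]
    exact ⟨⟨hemb.1.comp (outLeaf_injective k l), inter_subset_inter_right hF,
        inter_subset_inter_right hFU⟩, hemb.1.comp (inLeaf_injective k l),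
      inter_subset_inter_right hF, inter_subset_inter_right hFU⟩
  · intro φ hφ ψ hψ hφψ
    obtain ⟨hout, hin⟩ := Prod.mk.inj hφψ
    have hzero : φ 0 = ψ 0 := (mem_starsThrough.1 hφ).2.1.trans (mem_starsThrough.1 hψ).2.1.symm
    have hleaf : ∀ i : Fin (k + l), φ i.succ = ψ i.succ :=
      forall_fin_succ_iff_leaf.2 ⟨congr_fun hout, congr_fun hin⟩
    exact funext fun z => Fin.cases hzero hleaf z

lemma card_starsThrough_le_leafWeight (c : V) (F U : Finset V) :
    (#(starsThrough k l A c F U) : ℝ) ≤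
      leafWeight k l #(F ∩ outNbrs A c) #(F ∩ inNbrs A c)
        #(U ∩ outNbrs A c) #(U ∩ inNbrs A c) := by
  have hout := card_injectionsBetween_le (ι := Fin k) (F ∩ outNbrs A c) (U ∩ outNbrs A c)
  have hin := card_injectionsBetween_le (ι := Fin l) (F ∩ inNbrs A c) (U ∩ inNbrs A c)
  rw [Fintype.card_fin] at hout hin
  rw [leafWeight, mul_mul_mul_comm]
  exact_mod_cast (card_starsThrough_le_mul c F U).trans (Nat.mul_le_mul hout hin)

section

variable {c : V} {F U : Finset V} {r : ℝ}

lemma card_starsThrough_le (hopp : ∀ u v, A u v → ¬ A v u) (hr : (#(U ∩ nbrs A c) : ℝ) ≤ r)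
    {K : ℝ} (hK_nonneg : 0 ≤ K) (hK : ∀ i j, i + j = #F → ∀ a b : ℝ, 0 ≤ a → 0 ≤ b →
      leafWeight k l i j a b ≤ K * (a + b) ^ (k + l - #F)) :
    (#(starsThrough k l A c F U) : ℝ) ≤ K * r ^ (k + l - #F) := by
  have hr_nonneg : 0 ≤ r := (Nat.cast_nonneg _).trans hr
  rcases (starsThrough k l A c F U).eq_empty_or_nonempty with hempty | ⟨φ, hφ⟩
  · rw [hempty, card_empty, Nat.cast_zero]
    positivity
  obtain ⟨hemb, rfl, hF, -⟩ := mem_starsThrough.1 hφ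
  have hsum : #(F ∩ outNbrs A (φ 0)) + #(F ∩ inNbrs A (φ 0)) = #F := by
    rw [card_inter_outNbrs_add_card_inter_inNbrs hopp,
      inter_eq_left.2 (hF.trans hemb.leafImages_subset_nbrs)]
  rw [← card_inter_outNbrs_add_card_inter_inNbrs hopp U, Nat.cast_add] at hr
  calc (#(starsThrough k l A (φ 0) F U) : ℝ)
      ≤ leafWeight k l #(F ∩ outNbrs A (φ 0)) #(F ∩ inNbrs A (φ 0))
          #(U ∩ outNbrs A (φ 0)) #(U ∩ inNbrs A (φ 0)) := card_starsThrough_le_leafWeight _ _ _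
    _ ≤ K * (#(U ∩ outNbrs A (φ 0)) + #(U ∩ inNbrs A (φ 0))) ^ (k + l - #F) :=
        hK _ _ hsum _ _ (Nat.cast_nonneg _) (Nat.cast_nonneg _)
    _ ≤ K * r ^ (k + l - #F) := by gcongr

lemma card_starsThrough_empty_le (hopp : ∀ u v, A u v → ¬ A v u)
    (hr : (#(U ∩ nbrs A c) : ℝ) ≤ r) :
    (#(starsThrough k l A c ∅ U) : ℝ) ≤ lam0 k l * r ^ (k + l) := by
  refine card_starsThrough_le hopp hr (lam0_nonneg k l) fun i j hij a b ha hb => ?_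
  obtain ⟨rfl, rfl⟩ := Nat.add_eq_zero_iff.1 hij
  exact leafWeight_zero_zero_le k l ha hb

lemma card_starsThrough_singleton_le (hopp : ∀ u v, A u v → ¬ A v u) (hl : 1 ≤ l) (hlk : l ≤ k)
    (v : V) (hr : (#(U ∩ nbrs A c) : ℝ) ≤ r) :
    (#(starsThrough k l A c {v} U) : ℝ) ≤ lam1 k l * r ^ (k + l - 1) :=
  card_starsThrough_le hopp hr (lam1_nonneg k hl) fun _ _ hij _ _ ha hb =>
    leafWeight_le_lam1_mul hl hlk hij ha hb

lemma card_starsThrough_pair_le (hopp : ∀ u v, A u v → ¬ A v u) {x v : V} (hxv : x ≠ v)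
    (hr : (#(U ∩ nbrs A c) : ℝ) ≤ r) :
    (#(starsThrough k l A c {x, v} U) : ℝ) ≤
      (k + l).descFactorial 2 / (k + l).choose k * r ^ (k + l - 2) := by
  rw [← card_pair hxv]
  refine card_starsThrough_le hopp hr (by positivity) fun i j hij a b ha hb => ?_
  rw [← hij]
  exact leafWeight_le_descFactorial_div_choose_mul k l i j ha hb

end

lemma filter_apply_zero_eq_subset (X : Finset V) (v : V) :
    {φ ∈ starEmbs k l A | φ 0 = v} ⊆
      starsThrough k l A v ∅ Xᶜ ∪
        (X ∩ nbrs A v).biUnion fun x => starsThrough k l A v {x} (nbrs A x)ᶜ := by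
  intro φ hφ
  obtain ⟨hmem, rfl⟩ := mem_filter.1 hφ
  have hemb := mem_starEmbs.1 hmem
  by_cases hleaves : leafImages φ ⊆ Xᶜ
  · refine mem_union_left _ (mem_starsThrough.2 ⟨hemb, rfl, empty_subset _, ?_⟩)
    rwa [empty_union]
  · obtain ⟨x, hx, hxX⟩ := not_subset.1 hleaves
    have hmem : x ∈ X ∩ nbrs A (φ 0) :=
      mem_inter.2 ⟨by simpa using hxX, hemb.leafImages_subset_nbrs hx⟩
    exact mem_union_right _ <| mem_biUnion.2 ⟨x, hmem, mem_starsThrough.2 ⟨hemb, rfl,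
      singleton_subset_iff.2 hx, (hemb.leafImages_subset_compl_nbrs hx).trans subset_union_right⟩⟩

lemma filter_mem_leafImages_subset (X : Finset V) (v : V) :
    {φ ∈ starEmbs k l A | v ∈ leafImages φ} ⊆
      (X ∩ nbrs A v).biUnion (fun c => starsThrough k l A c {v} (Xᶜ \ nbrs A v)) ∪
        (Xᶜ ∩ nbrs A v).biUnion (fun c => starsThrough k l A c {v} Xᶜ) ∪
        (nbrs A v).biUnion fun c =>
          (X \ nbrs A v).biUnion fun x => starsThrough k l A c {x, v} (nbrs A x)ᶜ := by
  intro φ hφ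
  obtain ⟨hφ, hv⟩ := mem_filter.1 hφ
  have hemb := mem_starEmbs.1 hφ
  have hcentre : φ 0 ∈ nbrs A v := mem_nbrs_comm.1 (hemb.leafImages_subset_nbrs hv)
  have hindep : leafImages φ ⊆ (nbrs A v)ᶜ := hemb.leafImages_subset_compl_nbrs hv
  by_cases hleaves : leafImages φ ⊆ Xᶜ
  · refine mem_union_left _ ?_
    by_cases hX : φ 0 ∈ X
    · refine mem_union_left _ (mem_biUnion.2 ⟨φ 0, mem_inter.2 ⟨hX, hcentre⟩, ?_⟩)
      refine mem_starsThrough.2 ⟨hemb, rfl, singleton_subset_iff.2 hv, ?_⟩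
      exact (subset_inter hleaves hindep).trans (sdiff_eq_inter_compl Xᶜ _ ▸ subset_union_right)
    · refine mem_union_right _
        (mem_biUnion.2 ⟨φ 0, mem_inter.2 ⟨mem_compl.2 hX, hcentre⟩, ?_⟩)
      exact mem_starsThrough.2
        ⟨hemb, rfl, singleton_subset_iff.2 hv, hleaves.trans subset_union_right⟩
  · obtain ⟨x, hx, hxX⟩ := not_subset.1 hleaves
    have hmem : x ∈ X \ nbrs A v := mem_sdiff.2 ⟨by simpa using hxX, mem_compl.1 (hindep hx)⟩
    refine mem_union_right _ (mem_biUnion.2 ⟨φ 0, hcentre, mem_biUnion.2 ⟨x, hmem, ?_⟩⟩)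
    refine mem_starsThrough.2 ⟨hemb, rfl, insert_subset hx (singleton_subset_iff.2 hv), ?_⟩
    exact (hemb.leafImages_subset_compl_nbrs hx).trans subset_union_right

section

variable {X : Finset V} {v : V} {b e : ℝ}

lemma card_filter_apply_zero_eq_le (hopp : ∀ u v, A u v → ¬ A v u) (hl : 1 ≤ l) (hlk : l ≤ k)
    (hb : (#(Xᶜ ∩ nbrs A v) : ℝ) ≤ b) (he : ∀ x ∈ X, (#(nbrs A x)ᶜ : ℝ) ≤ e) :
    (#{φ ∈ starEmbs k l A | φ 0 = v} : ℝ) ≤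
      lam0 k l * b ^ (k + l) + #(X ∩ nbrs A v) * (lam1 k l * e ^ (k + l - 1)) := by
  have hX : (#((X ∩ nbrs A v).biUnion fun x => starsThrough k l A v {x} (nbrs A x)ᶜ) : ℝ) ≤
      #(X ∩ nbrs A v) * (lam1 k l * e ^ (k + l - 1)) := by
    refine natCast_card_biUnion_le _ _ fun x hx => card_starsThrough_singleton_le hopp hl hlk x ?_
    exact (Nat.cast_le.2 (card_le_card inter_subset_left)).trans (he x (mem_inter.1 hx).1)
  calc (#{φ ∈ starEmbs k l A | φ 0 = v} : ℝ)
      ≤ #(starsThrough k l A v ∅ Xᶜ) +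
          #((X ∩ nbrs A v).biUnion fun x => starsThrough k l A v {x} (nbrs A x)ᶜ) :=
        mod_cast (card_le_card (filter_apply_zero_eq_subset X v)).trans (card_union_le _ _)
    _ ≤ _ := add_le_add (card_starsThrough_empty_le hopp hb) hX

lemma card_filter_mem_leafImages_le (hopp : ∀ u v, A u v → ¬ A v u) (hl : 1 ≤ l) (hlk : l ≤ k)
    (hv : v ∉ X) (hb : ∀ c ∉ X, (#(Xᶜ ∩ nbrs A c) : ℝ) ≤ b)
    (he : ∀ x ∈ X, (#(nbrs A x)ᶜ : ℝ) ≤ e) :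
    (#{φ ∈ starEmbs k l A | v ∈ leafImages φ} : ℝ) ≤
      #(X ∩ nbrs A v) * (lam1 k l * (#(Xᶜ \ nbrs A v) : ℝ) ^ (k + l - 1)) +
        #(Xᶜ ∩ nbrs A v) * (lam1 k l * b ^ (k + l - 1)) +
        #(nbrs A v) * (#(X \ nbrs A v) *
          ((k + l).descFactorial 2 / (k + l).choose k * e ^ (k + l - 2))) := by
  refine (Nat.cast_le.2 (card_le_card (filter_mem_leafImages_subset X v))).trans ?_
  refine (Nat.cast_le.2 (card_union_le _ _)).trans ?_
  rw [Nat.cast_add]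
  refine add_le_add ((Nat.cast_le.2 (card_union_le _ _)).trans ?_) ?_
  · rw [Nat.cast_add]
    refine add_le_add ?_ ?_
    · refine natCast_card_biUnion_le _ _ fun c _ => ?_
      refine card_starsThrough_singleton_le hopp hl hlk v ?_
      exact Nat.cast_le.2 (card_le_card inter_subset_left)
    · refine natCast_card_biUnion_le _ _ fun c hc => ?_
      exact card_starsThrough_singleton_le hopp hl hlk v (hb c (mem_compl.1 (mem_inter.1 hc).1))
  · refine natCast_card_biUnion_le _ _ fun c _ => natCast_card_biUnion_le _ _ fun x hx => ?_
    have hxX : x ∈ X := (mem_sdiff.1 hx).1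
    refine card_starsThrough_pair_le hopp (ne_of_mem_of_not_mem hxX hv) ?_
    exact (Nat.cast_le.2 (card_le_card inter_subset_left)).trans (he x hxX)

lemma card_starEmbs_mem_image_le (hopp : ∀ u v, A u v → ¬ A v u) (hl : 1 ≤ l) (hlk : l ≤ k)
    (hv : v ∉ X) (hb : ∀ c ∉ X, (#(Xᶜ ∩ nbrs A c) : ℝ) ≤ b) (he_nonneg : 0 ≤ e)
    (he : ∀ x ∈ X, (#(nbrs A x)ᶜ : ℝ) ≤ e) :
    (#{φ ∈ starEmbs k l A | v ∈ univ.image φ} : ℝ) ≤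
      (lam0 k l + lam1 k l) * b ^ (k + l) +
        #(X ∩ nbrs A v) *
          (lam1 k l * ((#(Xᶜ \ nbrs A v) : ℝ) ^ (k + l - 1) + e ^ (k + l - 1))) +
        #(X \ nbrs A v) * ((#X + b) *
          ((k + l).descFactorial 2 / (k + l).choose k * e ^ (k + l - 2))) := by
  have hsplit : (#{φ ∈ starEmbs k l A | v ∈ univ.image φ} : ℝ) ≤
      #{φ ∈ starEmbs k l A | φ 0 = v} + #{φ ∈ starEmbs k l A | v ∈ leafImages φ} := by
    have hor (φ : Fin (k + l + 1) → V) : v ∈ univ.image φ ↔ φ 0 = v ∨ v ∈ leafImages φ := by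
      simp [Fin.exists_fin_succ, mem_leafImages]
    simp only [hor, filter_or]
    exact mod_cast card_union_le _ _
  have hcentre := card_filter_apply_zero_eq_le (k := k) hopp hl hlk (hb v hv) he
  have hleaf := card_filter_mem_leafImages_le (k := k) hopp hl hlk hv hb he
  have hY : #(Xᶜ ∩ nbrs A v) * (lam1 k l * b ^ (k + l - 1)) ≤ lam1 k l * b ^ (k + l) := by
    have hb_nonneg : 0 ≤ b := (Nat.cast_nonneg _).trans (hb v hv)
    have hlam1 := lam1_nonneg k hl
    calc _ ≤ b * (lam1 k l * b ^ (k + l - 1)) := by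
          gcongr
          exact hb v hv
      _ = lam1 k l * b ^ (k + l) := by rw [mul_left_comm, mul_pow_sub_one (by omega)]
  have hnbrs : (#(nbrs A v) : ℝ) ≤ #X + b := by
    have hsubset : nbrs A v ⊆ X ∪ (Xᶜ ∩ nbrs A v) := fun u hu => by
      by_cases hX : u ∈ X <;> simp [hX, hu]
    calc (#(nbrs A v) : ℝ) ≤ #X + #(Xᶜ ∩ nbrs A v) :=
          mod_cast (card_le_card hsubset).trans (card_union_le _ _)
      _ ≤ #X + b := by
          gcongr
          exact hb v hv
  have hnonnbrs : #(nbrs A v) * (#(X \ nbrs A v) *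
      ((k + l).descFactorial 2 / (k + l).choose k * e ^ (k + l - 2))) ≤
      #(X \ nbrs A v) * ((#X + b) *
        ((k + l).descFactorial 2 / (k + l).choose k * e ^ (k + l - 2))) := by
    rw [mul_left_comm]
    gcongr
  linarith

end

lemma rho_mul_card (v : V) : rho A v * Fintype.card V = #(nbrs A v) := by
  have hcard : (Fintype.card V : ℝ) ≠ 0 := mod_cast (Fintype.card_pos_iff.2 ⟨v⟩).ne'
  rw [rho, div_mul_cancel₀ _ hcard, Nat.subtype_card (nbrs A v) fun _ => mem_nbrs]

lemma rhoIn_compl_coe_mul_card (X : Finset V) (v : V) :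
    rhoIn A (X : Set V)ᶜ v * Fintype.card V = #(Xᶜ ∩ nbrs A v) := by
  have hcard : (Fintype.card V : ℝ) ≠ 0 := mod_cast (Fintype.card_pos_iff.2 ⟨v⟩).ne'
  rw [rhoIn, div_mul_cancel₀ _ hcard, Nat.subtype_card (Xᶜ ∩ nbrs A v) fun u => by
    rw [mem_inter, mem_compl, mem_nbrs, and_comm]; rfl]

lemma Smin_mul_pow_le (hk : 1 ≤ k) (hl : 1 ≤ l) (v : V) :
    Smin k l A * (Fintype.card V : ℝ) ^ (k + l) ≤ #{φ ∈ starEmbs k l A | v ∈ univ.image φ} := by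
  rw [← sVert_mul_pow hk hl, Smin]
  gcongr
  exact csInf_le (Set.finite_range _).bddBelow ⟨v, rfl⟩

lemma card_compl_nbrs_le {x : V} {D : ℝ} (hD : D ≤ rho A x) :
    (#(nbrs A x)ᶜ : ℝ) ≤ (1 - D) * Fintype.card V := by
  have hcompl : (#(nbrs A x) : ℝ) + #(nbrs A x)ᶜ = Fintype.card V :=
    mod_cast card_add_card_compl (nbrs A x)
  have hnbrs : D * Fintype.card V ≤ #(nbrs A x) := by
    rw [← rho_mul_card]
    gcongr
  linarith

lemma natCast_card_compl_sdiff_nbrs (X : Finset V) (v : V) :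
    (#(Xᶜ \ nbrs A v) : ℝ) =
      (1 - muSet (X : Set V) - rhoIn A (X : Set V)ᶜ v) * Fintype.card V := by
  have : Nonempty V := ⟨v⟩
  have hcompl : (#X : ℝ) + #Xᶜ = Fintype.card V := mod_cast card_add_card_compl X
  have hsdiff : (#(Xᶜ \ nbrs A v) : ℝ) + #(Xᶜ ∩ nbrs A v) = #Xᶜ :=
    mod_cast card_sdiff_add_card_inter Xᶜ (nbrs A v)
  rw [sub_mul, sub_mul, rhoIn_compl_coe_mul_card, muSet_coe_mul_card]
  linarith

lemma Smin_le_add_muSet_mul_add_muSet_mul (hopp : ∀ u v, A u v → ¬ A v u) (hl : 1 ≤ l)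
    (hlk : l ≤ k) {X : Finset V} {D β : ℝ} (hD : IsLeast (rho A '' X) D)
    (hβ : IsGreatest (rhoIn A (X : Set V)ᶜ '' (X : Set V)ᶜ) β) {v : V} (hv : v ∉ X)
    (hvβ : rhoIn A (X : Set V)ᶜ v = β) :
    Smin k l A ≤
      (lam0 k l + lam1 k l) * β ^ (k + l) +
        muSet (↑(X ∩ nbrs A v) : Set V) * (lam1 k l *
          ((1 - muSet (X : Set V) - β) ^ (k + l - 1) + (1 - D) ^ (k + l - 1))) +
        muSet (↑(X \ nbrs A v) : Set V) * ((muSet (X : Set V) + β) *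
          ((k + l).descFactorial 2 / (k + l).choose k * (1 - D) ^ (k + l - 2))) := by
  have : Nonempty V := ⟨v⟩
  have hn : (0 : ℝ) < Fintype.card V := mod_cast Fintype.card_pos
  have hb : ∀ c ∉ X, (#(Xᶜ ∩ nbrs A c) : ℝ) ≤ β * Fintype.card V := by
    intro c hc
    rw [← rhoIn_compl_coe_mul_card]
    gcongr
    exact hβ.2 ⟨c, hc, rfl⟩
  have he : ∀ x ∈ X, (#(nbrs A x)ᶜ : ℝ) ≤ (1 - D) * Fintype.card V :=
    fun x hx => card_compl_nbrs_le (hD.2 ⟨x, hx, rfl⟩)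
  have he_nonneg : 0 ≤ (1 - D) * (Fintype.card V : ℝ) := by
    obtain ⟨x, hx, -⟩ := hD.1
    exact (Nat.cast_nonneg _).trans (he x hx)
  have hbound := (Smin_mul_pow_le (hl.trans hlk) hl v).trans
    (card_starEmbs_mem_image_le hopp hl hlk hv hb he_nonneg he)
  rw [natCast_card_compl_sdiff_nbrs, ← muSet_coe_mul_card (X ∩ nbrs A v),
    ← muSet_coe_mul_card (X \ nbrs A v), ← muSet_coe_mul_card X, hvβ] at hbound
  simp only [mul_pow] at hbound
  refine le_of_mul_le_mul_right (hbound.trans_eq ?_) (pow_pos hn (k + l))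
  rw [← pow_mul_pow_sub (Fintype.card V : ℝ) (show 2 ≤ k + l by omega),
    show k + l - 1 = k + l - 2 + 1 by omega, pow_succ (Fintype.card V : ℝ) (k + l - 2)]
  ring

end Stars

theorem stmt11_general {k l : ℕ} (hl : 1 ≤ l) (hlk : l ≤ k) {V : Type*} [Fintype V]
    {A : V → V → Prop} (hopp : ∀ u v, A u v → ¬ A v u) {X : Set V} {D β : ℝ}
    (hD : IsLeast (rho A '' X) D) (hβ : IsGreatest (rhoIn A Xᶜ '' Xᶜ) β) :
    lam1 k l * muSet X * ((1 - muSet X - β) ^ (k + l - 1) + (1 - D) ^ (k + l - 1))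
        + (lam0 k l + lam1 k l) * β ^ (k + l) ≥ Smin k l A ∨
    (lam0 k l + lam1 k l) * β ^ (k + l)
        + (((k : ℝ) + l) * ((k : ℝ) + l - 1) / (Nat.choose (k + l) k : ℝ))
          * muSet X * (muSet X + β) * (1 - D) ^ (k + l - 2) ≥ Smin k l A := by
  classical
  lift X to Finset V using X.toFinite
  obtain ⟨v, hv, hvβ⟩ := hβ.1
  have : Nonempty V := ⟨v⟩
  have hbound := Smin_le_add_muSet_mul_add_muSet_mul hopp hl hlk hD hβ hv hvβ
  have hsum := muSet_inter_add_muSet_sdiff X (nbrs A v)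
  rw [Nat.cast_descFactorial_two, Nat.cast_add] at hbound
  exact (le_add_mul_or_le_add_mul (muSet_nonneg _) (muSet_nonneg _) hsum hbound).imp
    (fun h => h.trans_eq (by ring)) fun h => h.trans_eq (by ring)

theorem stmt11 (k l : ℕ) (hl : 1 ≤ l) (hlk : l ≤ k) (hm : 6 ≤ k + l)
    (V : Type) [Fintype V] (A : V → V → Prop)
    (hirr : Irreflexive A) (hopp : ∀ u v, A u v → ¬ A v u) (hn : 1 ≤ Fintype.card V)
    (hX : (bigX A).Nonempty) (hY : (bigY A).Nonempty) :
    lam1 k l * alphaX A * ((1 - alphaX A - betaY A) ^ (k + l - 1) + (1 - Dmin A) ^ (k + l - 1))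
        + (lam0 k l + lam1 k l) * betaY A ^ (k + l) ≥ Smin k l A ∨
    (lam0 k l + lam1 k l) * betaY A ^ (k + l)
        + (((k : ℝ) + l) * ((k : ℝ) + l - 1) / (Nat.choose (k + l) k : ℝ))
          * alphaX A * (alphaX A + betaY A) * (1 - Dmin A) ^ (k + l - 2) ≥ Smin k l A :=
  stmt11_general hl hlk hopp ((Set.toFinite _).isCompact.isLeast_sInf (hX.image _))
    ((Set.toFinite _).isCompact.isGreatest_sSup (hY.image _))
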